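/- arXiv:2403.14375 — 6 statements merged into one kernel-verified Lean document; each statement's English description precedes it below -/
import Mathlib

section
/- Let p be a prime number. Then there exist integers a and b with a² − a·b + b² = p if and only if p = 3 or p ≡ 1 (mod 6). -/
/-!
Write `N a b = a² - ab + b²`. Since `N a b = (a + b)² - 3ab` is a square modulo `3`, no prime
`p ≡ 2 (mod 3)` is a value of `N`. Conversely, if `6 ∣ p - 1` then `ZMod p` contains a primitive
sixth root of unity `w`, which satisfies `w² - w + 1 = 0`. As `p` is not a square, Thue's lemma
gives a nonzero pair `(a, b)` with `a = w b` in `ZMod p` and `a², b² < p`, so `N a b` is a multiple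
of `p` strictly between `0` and `3p`. It cannot be `2p`, because an even value of `N` is divisible
by `4`.
-/

theorem sq_sub_mul_add_sq_pos {R : Type*} [CommRing R] [LinearOrder R] [IsStrictOrderedRing R]
    {a b : R} (h : a ≠ 0 ∨ b ≠ 0) : 0 < a ^ 2 - a * b + b ^ 2 := by
  rcases h with ha | hb
  · nlinarith [sq_pos_of_ne_zero ha, sq_nonneg (a - 2 * b)]
  · nlinarith [sq_pos_of_ne_zero hb, sq_nonneg (2 * a - b)]

theorem sq_sub_mul_add_sq_lt_three_mul {R : Type*} [CommRing R] [LinearOrder R]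
    [IsStrictOrderedRing R] {a b c : R} (ha : a ^ 2 < c) (hb : b ^ 2 < c) :
    a ^ 2 - a * b + b ^ 2 < 3 * c := by
  nlinarith [sq_nonneg (a + b)]

theorem sq_sub_mul_add_sq_emod_three_ne_two (a b : ℤ) :
    (a ^ 2 - a * b + b ^ 2) % 3 ≠ 2 := by
  have two_not_square : ∀ x : ZMod 3, x ^ 2 ≠ 2 := by decide
  have three_eq_zero : (3 : ZMod 3) = 0 := by decide
  intro h
  have cast_eq_two : ((a ^ 2 - a * b + b ^ 2 : ℤ) : ZMod 3) = (2 : ℤ) :=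
    (ZMod.intCast_eq_intCast_iff' _ _ 3).mpr h
  push_cast at cast_eq_two
  exact two_not_square (a + b) (by linear_combination cast_eq_two + a * b * three_eq_zero)

theorem four_dvd_sq_sub_mul_add_sq {a b : ℤ} (h : 2 ∣ a ^ 2 - a * b + b ^ 2) :
    4 ∣ a ^ 2 - a * b + b ^ 2 := by
  have both_even : Even a ∧ Even b := by
    simp only [← even_iff_two_dvd, Int.even_add, Int.even_sub, Int.even_mul, Int.even_pow] at h
    tauto
  obtain ⟨⟨c, rfl⟩, ⟨d, rfl⟩⟩ := both_even
  exact ⟨c ^ 2 - c * d + d ^ 2, by ring⟩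

/-- **Thue's lemma**. -/
theorem exists_intCast_eq_mul_sq_lt {n : ℕ} (hn : ¬ IsSquare n) (w : ZMod n) :
    ∃ a b : ℤ, (a ≠ 0 ∨ b ≠ 0) ∧ a ^ 2 < n ∧ b ^ 2 < n ∧ (a : ZMod n) = w * b := by
  have : NeZero n := ⟨by rintro rfl; exact hn IsSquare.zero⟩
  set s := n.sqrt
  have sqrt_sq_lt : (s : ℤ) ^ 2 < n := by
    exact_mod_cast n.sqrt_le'.lt_of_ne fun h => hn ⟨s, by rw [← h, sq]⟩
  have sub_sq_lt : ∀ x ∈ Finset.range (s + 1), ∀ y ∈ Finset.range (s + 1),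
      ((x : ℤ) - y) ^ 2 < n := by
    intro x hx y hy
    rw [Finset.mem_range] at hx hy
    exact (sq_le_sq' (by omega) (by omega)).trans_lt sqrt_sq_lt
  have card_lt : (Finset.univ : Finset (ZMod n)).card <
      (Finset.range (s + 1) ×ˢ Finset.range (s + 1)).card := by
    simpa [ZMod.card] using n.lt_succ_sqrt
  obtain ⟨⟨x, y⟩, hxy, ⟨x', y'⟩, hxy', hne, heq⟩ :=
    Finset.exists_ne_map_eq_of_card_lt_of_maps_to card_lt
      (f := fun z : ℕ × ℕ => (z.1 : ZMod n) - w * z.2)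
      fun _ _ => Finset.mem_coe.mpr (Finset.mem_univ _)
  rw [Finset.mem_product] at hxy hxy'
  refine ⟨x - x', y - y', ?_, sub_sq_lt x hxy.1 x' hxy'.1, sub_sq_lt y hxy.2 y' hxy'.2, ?_⟩
  · contrapose! hne
    ext <;> omega
  · push_cast
    linear_combination heq

theorem not_two_dvd_of_sq_sub_self_add_one_eq_zero {n : ℕ} {w : ZMod n}
    (hw : w ^ 2 - w + 1 = 0) : ¬ 2 ∣ n := by
  intro h
  have no_root : ∀ x : ZMod 2, x ^ 2 - x + 1 ≠ 0 := by decide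
  refine no_root (ZMod.castHom h (ZMod 2) w) ?_
  rw [← map_pow, ← map_sub, ← map_one (ZMod.castHom h (ZMod 2)), ← map_add, hw, map_zero]

theorem exists_sq_sub_mul_add_sq_eq {n : ℕ} {w : ZMod n} (hw : w ^ 2 - w + 1 = 0) :
    ∃ a b : ℤ, a ^ 2 - a * b + b ^ 2 = n := by
  by_cases hn : IsSquare n
  · obtain ⟨m, rfl⟩ := hn
    exact ⟨m, 0, by push_cast; ring⟩
  obtain ⟨a, b, hab, ha, hb, hcast⟩ := exists_intCast_eq_mul_sq_lt hn w
  have n_dvd : (n : ℤ) ∣ a ^ 2 - a * b + b ^ 2 := by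
    rw [← ZMod.intCast_zmod_eq_zero_iff_dvd]
    push_cast
    rw [hcast]
    linear_combination (b : ZMod n) ^ 2 * hw
  obtain ⟨k, hk⟩ := n_dvd
  have k_pos : 0 < k :=
    pos_of_mul_pos_right (hk ▸ sq_sub_mul_add_sq_pos hab) n.cast_nonneg
  have k_lt_three : k < 3 := by
    have := hk ▸ sq_sub_mul_add_sq_lt_three_mul ha hb
    exact lt_of_mul_lt_mul_left (by linarith) n.cast_nonneg
  have k_ne_two : k ≠ 2 := by
    rintro rfl
    have four_dvd : 4 ∣ (n : ℤ) * 2 := hk ▸ four_dvd_sq_sub_mul_add_sq (hk ▸ dvd_mul_left 2 _)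
    exact not_two_dvd_of_sq_sub_self_add_one_eq_zero hw (by omega)
  obtain rfl : k = 1 := by omega
  exact ⟨a, b, by rw [hk, mul_one]⟩

theorem sq_sub_self_add_one_eq_zero_of_isPrimitiveRoot {R : Type*} [CommRing R] [IsDomain R]
    {w : R} (hw : IsPrimitiveRoot w 6) : w ^ 2 - w + 1 = 0 := by
  simpa [Polynomial.cyclotomic_six] using hw.isRoot_cyclotomic (by norm_num)

theorem exists_isPrimitiveRoot_of_dvd_sub_one {p k : ℕ} [Fact p.Prime] (h : k ∣ p - 1) :
    ∃ w : ZMod p, IsPrimitiveRoot w k :=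
  have : NeZero (p - 1) := ⟨Nat.sub_ne_zero_of_lt (Fact.out : p.Prime).one_lt⟩
  have := HasEnoughRootsOfUnity.of_dvd (ZMod p) h
  HasEnoughRootsOfUnity.exists_primitiveRoot (ZMod p) k

theorem eisenstein_norm_prime_iff (p : ℕ) (hp : p.Prime) :
    (∃ a b : ℤ, a ^ 2 - a * b + b ^ 2 = (p : ℤ)) ↔ p = 3 ∨ p % 6 = 1 := by
  constructor
  · rintro ⟨a, b, h⟩
    have p_mod_three : (p : ℤ) % 3 ≠ 2 := h ▸ sq_sub_mul_add_sq_emod_three_ne_two a b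
    have eq_three_of_dvd : 3 ∣ p → 3 = p := (Nat.prime_dvd_prime_iff_eq Nat.prime_three hp).mp
    have two_or_odd : p = 2 ∨ p % 2 = 1 := hp.eq_two_or_odd
    omega
  · rintro (rfl | h)
    · exact ⟨2, 1, by norm_num⟩
    · have : Fact p.Prime := ⟨hp⟩
      obtain ⟨w, hw⟩ := exists_isPrimitiveRoot_of_dvd_sub_one (p := p) (k := 6) (by omega)
      exact exists_sq_sub_mul_add_sq_eq (sq_sub_self_add_one_eq_zero_of_isPrimitiveRoot hw)
end

section
/- Let p be a prime number with p ≡ 1 (mod 6). Then there exist integers a and b with a² − a·b + b² = p. -/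
/-!
If `w ^ 2 + w + 1 = 0` in `ZMod n`, then `{(x, y) | x = -w * y in ZMod n}` is a sublattice of `ℤ²`
of index `n` on which `n` divides `x ^ 2 - x * y + y ^ 2`. By the pigeonhole principle (Thue's
lemma) it contains a nonzero point with `x ^ 2, y ^ 2 ≤ n`, where the form takes one of the values
`n`, `2 * n`, `3 * n`. For `2 * n`, both `x` and `y` would be even and hence so would `n`, but
`w ^ 2 + w + 1` has no zero modulo `2`. The value `3 * n` reduces to `n` because an Eisenstein
integer whose norm is divisible by `3` is divisible by `1 - ω`, which has norm `3`. For a prime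
`p ≡ 1 [MOD 3]`, an element of order `3` of `(ZMod p)ˣ` is such a `w`.
-/

/-- The norm `a ^ 2 - a * b + b ^ 2` of the Eisenstein integer `a + b * ω`, as a binary quadratic
form. It is defined over any commutative ring so that it can be reduced modulo `n`. -/
def eisensteinNorm {R : Type*} [CommRing R] (a b : R) : R :=
  a ^ 2 - a * b + b ^ 2

namespace eisensteinNorm

section CommRing

variable {R : Type*} [CommRing R]

theorem intCast (x y : ℤ) :
    ((eisensteinNorm x y : ℤ) : R) = eisensteinNorm (x : R) (y : R) := by
  simp only [eisensteinNorm, Int.cast_add, Int.cast_sub, Int.cast_mul, Int.cast_pow]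

theorem neg_mul_self (w y : R) : eisensteinNorm (-(w * y)) y = (w ^ 2 + w + 1) * y ^ 2 := by
  unfold eisensteinNorm
  ring

end CommRing

section Ordered

variable {R : Type*} [CommRing R] [LinearOrder R] [IsStrictOrderedRing R] {x y c : R}

theorem pos (h : (x, y) ≠ 0) : 0 < eisensteinNorm x y := by
  have complete_square : 4 * eisensteinNorm x y = (2 * x - y) ^ 2 + 3 * y ^ 2 := by
    unfold eisensteinNorm
    ring
  rcases eq_or_ne y 0 with rfl | hy
  · have hx : x ≠ 0 := fun hx => h (by simp [hx])
    simpa [eisensteinNorm] using sq_pos_of_ne_zero hx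
  · have hy2 : 0 < y ^ 2 := by positivity
    linarith [sq_nonneg (2 * x - y)]

theorem le_three_mul (hx : x ^ 2 ≤ c) (hy : y ^ 2 ≤ c) : eisensteinNorm x y ≤ 3 * c := by
  unfold eisensteinNorm
  linarith [sq_nonneg (x + y)]

end Ordered

theorem even_iff {x y : ℤ} : Even (eisensteinNorm x y) ↔ Even x ∧ Even y := by
  simp only [eisensteinNorm, Int.even_add, Int.even_sub, Int.even_mul, Int.even_pow]
  tauto

theorem exists_eq_of_eq_three_mul {x y n : ℤ} (h : eisensteinNorm x y = 3 * n) :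
    ∃ a b : ℤ, eisensteinNorm a b = n := by
  unfold eisensteinNorm at *
  obtain ⟨m, hm⟩ : (3 : ℤ) ∣ x + y :=
    Int.prime_three.dvd_of_dvd_pow (n := 2) ⟨n + x * y, by linarith⟩
  obtain rfl : x = 3 * m - y := by linarith
  exact ⟨y - m, m, by linarith⟩

end eisensteinNorm

theorem exists_abs_le_zsmul_eq_zsmul {A : Type*} [AddCommGroup A] [Finite A] {k l : ℕ}
    (h : Nat.card A < (k + 1) * (l + 1)) (u v : A) :
    ∃ x y : ℤ, (x, y) ≠ 0 ∧ |x| ≤ k ∧ |y| ≤ l ∧ x • u = y • v := by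
  have := Fintype.ofFinite A
  let f : Fin (k + 1) × Fin (l + 1) → A := fun q => (q.1 : ℤ) • u - (q.2 : ℤ) • v
  obtain ⟨⟨a, b⟩, ⟨c, d⟩, hne, hf⟩ : ∃ q r, q ≠ r ∧ f q = f r :=
    Fintype.exists_ne_map_eq_of_card_lt f (by simpa using h)
  refine ⟨a - c, b - d, fun h0 => hne ?_, by grind, by grind, ?_⟩
  · simp only [Prod.mk_eq_zero] at h0
    ext <;> grind
  · rw [sub_smul, sub_smul]
    exact sub_eq_sub_iff_sub_eq_sub.mp hf

theorem exists_sq_le_intCast_eq_mul (n : ℕ) [NeZero n] (w : ZMod n) :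
    ∃ x y : ℤ, (x, y) ≠ 0 ∧ x ^ 2 ≤ n ∧ y ^ 2 ≤ n ∧ (x : ZMod n) = w * y := by
  obtain ⟨x, y, hxy, hx, hy, h⟩ := exists_abs_le_zsmul_eq_zsmul
    (by simpa using Nat.lt_succ_sqrt n) (1 : ZMod n) w
  have sq_le {z : ℤ} (hz : |z| ≤ n.sqrt) : z ^ 2 ≤ n :=
    calc z ^ 2 ≤ (n.sqrt : ℤ) ^ 2 := sq_le_sq' (abs_le.mp hz).1 (abs_le.mp hz).2
      _ ≤ n := mod_cast Nat.sqrt_le' n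
  exact ⟨x, y, hxy, sq_le hx, sq_le hy, by simpa [mul_comm] using h⟩

theorem odd_of_sq_add_self_add_one_eq_zero {n : ℕ} {w : ZMod n} (hw : w ^ 2 + w + 1 = 0) :
    Odd n := by
  by_contra hn
  have h2 : 2 ∣ n := even_iff_two_dvd.mp (Nat.not_odd_iff_even.mp hn)
  have no_root : ∀ v : ZMod 2, v ^ 2 + v + 1 ≠ 0 := by decide
  apply no_root (ZMod.castHom h2 (ZMod 2) w)
  rw [← map_pow, ← map_add, ← map_one (ZMod.castHom h2 (ZMod 2)), ← map_add, hw, map_zero]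

theorem exists_eisensteinNorm_eq_of_sq_add_self_add_one_eq_zero {n : ℕ} {w : ZMod n}
    (hw : w ^ 2 + w + 1 = 0) : ∃ a b : ℤ, eisensteinNorm a b = n := by
  have hn : Odd n := odd_of_sq_add_self_add_one_eq_zero hw
  have : NeZero n := ⟨hn.pos.ne'⟩
  obtain ⟨x, y, hxy, hx, hy, hxwy⟩ := exists_sq_le_intCast_eq_mul n (-w)
  have n_dvd : (n : ℤ) ∣ eisensteinNorm x y := by
    rw [← ZMod.intCast_zmod_eq_zero_iff_dvd, eisensteinNorm.intCast, hxwy, neg_mul,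
      eisensteinNorm.neg_mul_self, hw, zero_mul]
  obtain ⟨k, hk⟩ := n_dvd
  have n_pos : (0 : ℤ) < n := mod_cast hn.pos
  have k_pos : 0 < k := pos_of_mul_pos_right (hk ▸ eisensteinNorm.pos hxy) n_pos.le
  have k_le : k ≤ 3 := le_of_mul_le_mul_left
    (by linarith [eisensteinNorm.le_three_mul hx hy]) n_pos
  obtain rfl | rfl | rfl : k = 1 ∨ k = 2 ∨ k = 3 := by lia
  · exact ⟨x, y, by rw [hk, mul_one]⟩
  · obtain ⟨⟨x', rfl⟩, ⟨y', rfl⟩⟩ := eisensteinNorm.even_iff.mp (hk ▸ even_two.mul_left (n : ℤ))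
    have n_even : Even (n : ℤ) := ⟨eisensteinNorm x' y', by unfold eisensteinNorm at *; linarith⟩
    exact absurd ((Int.even_coe_nat n).mp n_even) (Nat.not_even_iff_odd.mpr hn)
  · exact eisensteinNorm.exists_eq_of_eq_three_mul (hk.trans (mul_comm _ _))

theorem exists_sq_add_self_add_one_eq_zero {R : Type*} [CommRing R] [IsDomain R] [Finite Rˣ]
    (h : 3 ∣ Nat.card Rˣ) : ∃ w : R, w ^ 2 + w + 1 = 0 := by
  have : Fact (Nat.Prime 3) := ⟨Nat.prime_three⟩
  obtain ⟨u, hu⟩ := exists_prime_orderOf_dvd_card' 3 h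
  have primitive : IsPrimitiveRoot (u : R) 3 :=
    IsPrimitiveRoot.coe_units_iff.mpr (hu ▸ IsPrimitiveRoot.orderOf u)
  have geom_sum := primitive.geom_sum_eq_zero (by norm_num)
  simp only [Finset.sum_range_succ, Finset.sum_range_zero] at geom_sum
  exact ⟨u, by linear_combination geom_sum⟩

theorem eisenstein_norm_of_prime_mod_six (p : ℕ) (hp : p.Prime) (h : p % 6 = 1) :
    ∃ a b : ℤ, a ^ 2 - a * b + b ^ 2 = (p : ℤ) := by
  have : Fact p.Prime := ⟨hp⟩
  have three_dvd : 3 ∣ Nat.card (ZMod p)ˣ := by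
    rw [Nat.card_eq_fintype_card, ZMod.card_units]
    lia
  obtain ⟨w, hw⟩ := exists_sq_add_self_add_one_eq_zero three_dvd
  exact exists_eisensteinNorm_eq_of_sq_add_self_add_one_eq_zero hw
end

section
/- Let p be a prime number with p ≠ 3, and suppose there exist integers a and b with a² − a·b + b² = p. Then p ≡ 1 (mod 6). -/
/-!
Modulo `3` the form `a² - ab + b²` is the square `(a + b)²`, so a value prime to `3` is `1` modulo
`3`. Modulo `2` it has no nontrivial zero, so an even value is divisible by `4` and in particular is
never the prime `2`.
-/

theorem eisenstein_norm_modEq_add_sq (a b : ℤ) :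
    a ^ 2 - a * b + b ^ 2 ≡ (a + b) ^ 2 [ZMOD 3] :=
  Int.modEq_iff_dvd.2 ⟨a * b, by ring⟩

theorem eisenstein_norm_modEq_one_of_not_three_dvd {a b : ℤ}
    (h : ¬3 ∣ a ^ 2 - a * b + b ^ 2) : a ^ 2 - a * b + b ^ 2 ≡ 1 [ZMOD 3] := by
  have hsq := eisenstein_norm_modEq_add_sq a b
  have hab : ¬3 ∣ a + b := fun hdvd ↦ h (hsq.dvd_iff.2 (dvd_pow hdvd two_ne_zero))
  have hcop : IsCoprime (a + b) 3 := (Int.prime_three.coprime_iff_not_dvd.2 hab).symm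
  exact hsq.trans (Int.ModEq.pow_card_sub_one_eq_one Nat.prime_three hcop)

theorem even_eisenstein_norm_iff {a b : ℤ} :
    Even (a ^ 2 - a * b + b ^ 2) ↔ Even a ∧ Even b := by
  simp only [Int.even_add, Int.even_sub, Int.even_mul, Int.even_pow]
  tauto

theorem four_dvd_eisenstein_norm_of_even {a b : ℤ} (h : Even (a ^ 2 - a * b + b ^ 2)) :
    4 ∣ a ^ 2 - a * b + b ^ 2 := by
  obtain ⟨⟨c, rfl⟩, ⟨d, rfl⟩⟩ := even_eisenstein_norm_iff.1 h
  exact ⟨c ^ 2 - c * d + d ^ 2, by ring⟩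

theorem prime_mod_six_of_eisenstein_norm_general {n : ℤ} (h3 : ¬3 ∣ n) (h4 : ¬4 ∣ n)
    (h : ∃ a b : ℤ, a ^ 2 - a * b + b ^ 2 = n) : n ≡ 1 [ZMOD 6] := by
  obtain ⟨a, b, rfl⟩ := h
  have hmod3 := eisenstein_norm_modEq_one_of_not_three_dvd h3
  have hmod2 : a ^ 2 - a * b + b ^ 2 ≡ 1 [ZMOD 2] :=
    Int.odd_iff.1 (Int.not_even_iff_odd.1 (mt four_dvd_eisenstein_norm_of_even h4))
  exact (Int.modEq_and_modEq_iff_modEq_mul (by decide)).1 ⟨hmod2, hmod3⟩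

theorem prime_mod_six_of_eisenstein_norm (p : ℕ) (hp : p.Prime) (hp3 : p ≠ 3)
    (h : ∃ a b : ℤ, a ^ 2 - a * b + b ^ 2 = (p : ℤ)) : p % 6 = 1 := by
  have h3 : ¬3 ∣ p := (Nat.prime_dvd_prime_iff_eq Nat.prime_three hp).not.2 hp3.symm
  have h4 : ¬4 ∣ p := fun hdvd ↦ by simpa using hp.prime.squarefree 2 hdvd
  exact_mod_cast prime_mod_six_of_eisenstein_norm_general (mod_cast h3) (mod_cast h4) h
end

section
/- Let p be a prime number and let ω = exp(2πi/3) = −1/2 + (√3/2)·i ∈ ℂ. Then there exist integers a and b with |a + b·ω|² = p (i.e. the complex norm-squared of a + bω equals p) if and only if p = 3 or p ≡ 1 (mod 6). -/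
noncomputable def omegaC : ℂ := -1/2 + (Real.sqrt 3 / 2) * Complex.I

section CommRing

variable {R S : Type*} [CommRing R] [CommRing S]

theorem map_eisensteinNorm (f : R →+* S) (a b : R) :
    f (eisensteinNorm a b) = eisensteinNorm (f a) (f b) := by
  simp only [eisensteinNorm, map_add, map_sub, map_mul, map_pow]

theorem intCast_eisensteinNorm (a b : ℤ) :
    ((eisensteinNorm a b : ℤ) : R) = eisensteinNorm (a : R) (b : R) :=
  map_eisensteinNorm (Int.castRingHom R) a b

theorem eisensteinNorm_mul_mul_right (a b c : R) :
    eisensteinNorm (a * c) (b * c) = eisensteinNorm a b * c ^ 2 := by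
  unfold eisensteinNorm
  ring

end CommRing

section Ordered

variable {R : Type*} [CommRing R] [LinearOrder R] [IsStrictOrderedRing R]

theorem eisensteinNorm_pos {a b : R} (h : a ≠ 0 ∨ b ≠ 0) : 0 < eisensteinNorm a b := by
  have two_mul_eq : 2 * eisensteinNorm a b = a ^ 2 + b ^ 2 + (a - b) ^ 2 := by
    unfold eisensteinNorm
    ring
  rcases h with ha | hb
  · linarith [sq_pos_of_ne_zero ha, sq_nonneg b, sq_nonneg (a - b)]
  · linarith [sq_pos_of_ne_zero hb, sq_nonneg a, sq_nonneg (a - b)]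

theorem two_mul_eisensteinNorm_le (a b : R) :
    2 * eisensteinNorm a b ≤ 3 * (a ^ 2 + b ^ 2) := by
  unfold eisensteinNorm
  linarith [sq_nonneg (a + b), add_sq a b]

end Ordered

theorem normSq_add_mul_omegaC (x y : ℝ) :
    Complex.normSq (x + y * omegaC) = eisensteinNorm x y := by
  have re_add_im : (x : ℂ) + y * omegaC =
      ((x - y / 2 : ℝ) : ℂ) + ((y * √3 / 2 : ℝ) : ℂ) * Complex.I := by
    unfold omegaC
    push_cast
    ring
  have sq_sqrt_three : √3 ^ 2 = (3 : ℝ) := Real.sq_sqrt (by norm_num)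
  rw [re_add_im, Complex.normSq_add_mul_I, eisensteinNorm]
  linear_combination y ^ 2 / 4 * sq_sqrt_three

theorem normSq_intCast_add_mul_omegaC_eq_natCast_iff (a b : ℤ) (n : ℕ) :
    Complex.normSq (a + b * omegaC) = n ↔ eisensteinNorm a b = n := by
  have normSq_eq := normSq_add_mul_omegaC a b
  rw [← intCast_eisensteinNorm] at normSq_eq
  push_cast at normSq_eq
  rw [normSq_eq]
  norm_cast

theorem eisensteinNorm_not_modEq {m : ℕ} {c : ℤ} (h : ∀ x y : ZMod m, eisensteinNorm x y ≠ c)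
    (a b : ℤ) : ¬ eisensteinNorm a b ≡ c [ZMOD m] := by
  rw [← ZMod.intCast_eq_intCast_iff, intCast_eisensteinNorm]
  exact h a b

theorem eisensteinNorm_emod_three_ne_two (a b : ℤ) : eisensteinNorm a b % 3 ≠ 2 :=
  eisensteinNorm_not_modEq (m := 3) (c := 2) (by decide) a b

theorem eisensteinNorm_emod_four_ne_two (a b : ℤ) : eisensteinNorm a b % 4 ≠ 2 :=
  eisensteinNorm_not_modEq (m := 4) (c := 2) (by decide) a b

theorem odd_of_eisensteinNorm_one_eq_zero {n : ℕ} {u : ZMod n} (hu : eisensteinNorm u 1 = 0) :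
    Odd n := by
  have ne_zero_zmod_two : ∀ x : ZMod 2, eisensteinNorm x 1 ≠ 0 := by decide
  by_contra h
  have two_dvd : 2 ∣ n := (Nat.not_odd_iff_even.mp h).two_dvd
  apply ne_zero_zmod_two (ZMod.castHom two_dvd (ZMod 2) u)
  rw [← map_one (ZMod.castHom two_dvd (ZMod 2)), ← map_eisensteinNorm, hu, map_zero]

theorem exists_eisensteinNorm_one_eq_zero {F : Type*} [Field F] [Finite F]
    (h : 3 ∣ Nat.card F - 1) : ∃ u : F, eisensteinNorm u 1 = 0 := by
  rw [← Nat.card_units] at h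
  have : Fact (Nat.Prime 3) := ⟨Nat.prime_three⟩
  obtain ⟨v, orderOf_v⟩ := exists_prime_orderOf_dvd_card' 3 h
  have primitive : IsPrimitiveRoot (v : F) 3 :=
    IsPrimitiveRoot.coe_units_iff.mpr (orderOf_v ▸ IsPrimitiveRoot.orderOf v)
  have root := primitive.isRoot_cyclotomic three_pos
  simp only [Polynomial.cyclotomic_three, Polynomial.IsRoot.def, Polynomial.eval_add,
    Polynomial.eval_pow, Polynomial.eval_X, Polynomial.eval_one] at root
  refine ⟨-v, ?_⟩
  unfold eisensteinNorm
  linear_combination root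

theorem exists_zsmul_eq_zsmul_of_card_lt_mul {A : Type*} [AddCommGroup A] [Finite A] {k l : ℕ}
    (h : Nat.card A < k * l) (x y : A) :
    ∃ a b : ℤ, (a ≠ 0 ∨ b ≠ 0) ∧ |a| < k ∧ |b| < l ∧ a • x = b • y := by
  have := Fintype.ofFinite A
  obtain ⟨⟨i, j⟩, ⟨i', j'⟩, hne, heq⟩ := Fintype.exists_ne_map_eq_of_card_lt
    (fun q : Fin k × Fin l => (q.1 : ℤ) • x - (q.2 : ℤ) • y)
    (by simpa [Nat.card_eq_fintype_card] using h)
  refine ⟨i - i', j - j', ?_, by grind, by grind, ?_⟩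
  · contrapose! hne
    ext <;> grind
  · rw [sub_smul, sub_smul]
    exact sub_eq_sub_iff_sub_eq_sub.mp heq

/-- **Thue's lemma**. The bounds cannot both be strict in general, e.g. for `n = 4` and `u = 2`. -/
theorem exists_intCast_eq_mul_of_sq_le {n : ℕ} [NeZero n] (u : ZMod n) :
    ∃ a b : ℤ, (a ≠ 0 ∨ b ≠ 0) ∧ a ^ 2 ≤ n ∧ b ^ 2 < n ∧ (a : ZMod n) = u * b := by
  set s := Nat.sqrt n
  set t := Nat.sqrt (n - 1)
  have n_pos : 0 < n := NeZero.pos n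
  have s_sq_le : s ^ 2 ≤ n := Nat.sqrt_le' n
  have t_sq_lt : t ^ 2 < n := (Nat.sqrt_le' (n - 1)).trans_lt (Nat.sub_one_lt_of_lt n_pos)
  have card_lt : Nat.card (ZMod n) < (s + 1) * (t + 1) := by
    rw [Nat.card_zmod]
    have lt_s : n < (s + 1) ^ 2 := Nat.lt_succ_sqrt' n
    have le_t : n ≤ (t + 1) ^ 2 := Nat.le_of_pred_lt (Nat.lt_succ_sqrt' (n - 1))
    have t_le_s : t ≤ s := Nat.sqrt_le_sqrt (Nat.sub_le n 1)
    rcases t_le_s.eq_or_lt with h | h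
    · rwa [h, ← sq]
    · nlinarith
  obtain ⟨a, b, hne, ha, hb, hab⟩ := exists_zsmul_eq_zsmul_of_card_lt_mul card_lt 1 u
  have a_sq_le : a ^ 2 ≤ (s : ℤ) ^ 2 := sq_le_sq.mpr (by grind)
  have b_sq_le : b ^ 2 ≤ (t : ℤ) ^ 2 := sq_le_sq.mpr (by grind)
  refine ⟨a, b, hne, a_sq_le.trans (mod_cast s_sq_le), b_sq_le.trans_lt (mod_cast t_sq_lt), ?_⟩
  simpa [mul_comm] using hab

theorem exists_eisensteinNorm_eq_natCast {n : ℕ} [NeZero n] {u : ZMod n}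
    (hu : eisensteinNorm u 1 = 0) : ∃ a b : ℤ, eisensteinNorm a b = n := by
  obtain ⟨a, b, hne, ha, hb, hab⟩ := exists_intCast_eq_mul_of_sq_le u
  have n_dvd : (n : ℤ) ∣ eisensteinNorm a b := by
    rw [← ZMod.intCast_zmod_eq_zero_iff_dvd, intCast_eisensteinNorm, hab]
    simpa only [hu, one_mul, zero_mul] using eisensteinNorm_mul_mul_right u 1 (b : ZMod n)
  have norm_pos : 0 < eisensteinNorm a b := eisensteinNorm_pos hne
  have norm_lt : eisensteinNorm a b < 3 * n := by linarith [two_mul_eisensteinNorm_le a b]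
  obtain ⟨k, hk⟩ := n_dvd
  have k_pos : 0 < k := by nlinarith
  have k_lt : k < 3 := by nlinarith
  have k_ne_two : k ≠ 2 := by
    have n_odd : Odd n := odd_of_eisensteinNorm_one_eq_zero hu
    have := eisensteinNorm_emod_four_ne_two a b
    grind
  obtain rfl : k = 1 := by omega
  exact ⟨a, b, by rw [hk, mul_one]⟩

theorem prime_is_eisenstein_norm_iff (p : ℕ) (hp : p.Prime) :
    (∃ a b : ℤ, Complex.normSq ((a : ℂ) + (b : ℂ) * omegaC) = (p : ℝ)) ↔
      p = 3 ∨ p % 6 = 1 := by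
  have : Fact p.Prime := ⟨hp⟩
  simp only [normSq_intCast_add_mul_omegaC_eq_natCast_iff]
  constructor
  · rintro ⟨a, b, norm_eq⟩
    have mod_three_ne_two : (p : ℤ) % 3 ≠ 2 := norm_eq ▸ eisensteinNorm_emod_three_ne_two a b
    have eq_three_of_mod : p % 3 = 0 → p = 3 := fun h =>
      ((Nat.prime_dvd_prime_iff_eq Nat.prime_three hp).mp (Nat.dvd_of_mod_eq_zero h)).symm
    have two_or_odd := hp.eq_two_or_odd
    omega
  · rintro (rfl | mod_six)
    · exact ⟨1, -1, rfl⟩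
    · have three_dvd : 3 ∣ Nat.card (ZMod p) - 1 := by
        rw [Nat.card_zmod]
        omega
      obtain ⟨u, hu⟩ := exists_eisensteinNorm_one_eq_zero three_dvd
      exact exists_eisensteinNorm_eq_natCast hu
end

section
/- Let a/c and b/d be two distinct reduced rational numbers (a, c coprime, c > 0; b, d coprime, d > 0). Then the open disks D₁ of radius 1/(2c²) centered at a/c + i/(2c²) and D₂ of radius 1/(2d²) centered at b/d + i/(2d²) are disjoint, and their closures are tangent if and only if |a·d − b·c| = 1. -/
/-!
Let two disks of radii `r` and `s` touch the real line from above at `x` and `y`. By Pythagoras the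
squared distance between their centers exceeds `(r + s) ^ 2` by `(x - y) ^ 2 - 4 * r * s`, so the
sign of this difference decides whether the disks overlap, touch or are apart. For the Ford disks at
`a / c` and `b / d` it is `((a * d - b * c) ^ 2 - 1) / (c * d) ^ 2`, and a nonzero integer
`a * d - b * c` has absolute value at least `1`.
-/

/-- The open horodisk of the upper half-plane based at the real point `x`: the Euclidean disk of
radius `r` tangent to the real line at `x` from above. -/
def horodisk (x r : ℝ) : Set ℂ :=
  Metric.ball ⟨x, r⟩ r

theorem dist_sq_horodisk_centers (x y r s : ℝ) :
    dist (⟨x, r⟩ : ℂ) ⟨y, s⟩ ^ 2 = (r + s) ^ 2 + ((x - y) ^ 2 - 4 * r * s) := by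
  rw [Complex.dist_mk, Real.sq_sqrt (by positivity)]
  ring

section Horodisk

variable {x y r s : ℝ}

theorem disjoint_horodisk_iff (hr : 0 < r) (hs : 0 < s) :
    Disjoint (horodisk x r) (horodisk y s) ↔ 4 * r * s ≤ (x - y) ^ 2 := by
  rw [horodisk, horodisk, disjoint_ball_ball_iff hr hs,
    ← sq_le_sq₀ (add_pos hr hs).le dist_nonneg, dist_sq_horodisk_centers,
    le_add_iff_nonneg_right, sub_nonneg]

theorem closure_horodisk_inter_nonempty_iff (hr : 0 < r) (hs : 0 < s) :
    (closure (horodisk x r) ∩ closure (horodisk y s)).Nonempty ↔ (x - y) ^ 2 ≤ 4 * r * s := by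
  rw [horodisk, horodisk, closure_ball _ hr.ne', closure_ball _ hs.ne',
    ← Set.not_disjoint_iff_nonempty_inter, disjoint_closedBall_closedBall_iff hr.le hs.le, not_lt,
    ← sq_le_sq₀ dist_nonneg (add_pos hr hs).le, dist_sq_horodisk_centers,
    add_le_iff_nonpos_right, sub_nonpos]

end Horodisk

/-- The Euclidean radius of the Ford circle at a fraction with denominator `c`, defined for every
real `c`; it has the junk value `0` at `c = 0`. -/
noncomputable def fordRadius (c : ℝ) : ℝ :=
  1 / (2 * c ^ 2)

theorem fordRadius_pos {c : ℝ} (hc : c ≠ 0) : 0 < fordRadius c := by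
  rw [fordRadius]
  positivity

theorem four_mul_fordRadius_mul_fordRadius (c d : ℝ) :
    4 * fordRadius c * fordRadius d = 1 / (c * d) ^ 2 := by
  rw [fordRadius, fordRadius]
  ring

/-- The open Ford disk at `a / c`. It depends on the pair `(a, c)` and not only on the quotient;
the classical Ford disks are those with `a` and `c ≠ 0` coprime integers. -/
noncomputable def fordDisk (a c : ℝ) : Set ℂ :=
  horodisk (a / c) (fordRadius c)

theorem fordDisk_intCast (a c : ℤ) :
    fordDisk a c = Metric.ball ((a : ℂ) / (c : ℂ) + Complex.I / (2 * (c : ℂ) ^ 2))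
      (1 / (2 * (c : ℝ) ^ 2)) := by
  rw [fordDisk, horodisk, fordRadius, Complex.mk_eq_add_mul_I]
  congr 1
  push_cast
  ring

theorem div_sub_div_sq {K : Type*} [Field K] (a b : K) {c d : K} (hc : c ≠ 0) (hd : d ≠ 0) :
    (a / c - b / d) ^ 2 = (a * d - b * c) ^ 2 / (c * d) ^ 2 := by
  rw [div_sub_div a b hc hd, div_pow, mul_comm c b]

section FordDisk

variable {a b c d : ℝ}

theorem disjoint_fordDisk_iff (hc : c ≠ 0) (hd : d ≠ 0) :
    Disjoint (fordDisk a c) (fordDisk b d) ↔ 1 ≤ |a * d - b * c| := by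
  rw [fordDisk, fordDisk, disjoint_horodisk_iff (fordRadius_pos hc) (fordRadius_pos hd),
    div_sub_div_sq a b hc hd, four_mul_fordRadius_mul_fordRadius,
    div_le_div_iff_of_pos_right (by positivity), one_le_sq_iff_one_le_abs]

theorem closure_fordDisk_inter_nonempty_iff (hc : c ≠ 0) (hd : d ≠ 0) :
    (closure (fordDisk a c) ∩ closure (fordDisk b d)).Nonempty ↔ |a * d - b * c| ≤ 1 := by
  rw [fordDisk, fordDisk,
    closure_horodisk_inter_nonempty_iff (fordRadius_pos hc) (fordRadius_pos hd),
    div_sub_div_sq a b hc hd, four_mul_fordRadius_mul_fordRadius,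
    div_le_div_iff_of_pos_right (by positivity), sq_le_one_iff_abs_le_one]

end FordDisk

theorem ford_disks_disjoint_and_tangent_iff_general {a b c d : ℤ} (hc : c ≠ 0) (hd : d ≠ 0)
    (hne : a * d ≠ b * c) :
    Disjoint (fordDisk a c) (fordDisk b d) ∧
      ((closure (fordDisk a c) ∩ closure (fordDisk b d)).Nonempty ↔ |a * d - b * c| = 1) := by
  have one_le : 1 ≤ |a * d - b * c| := Int.one_le_abs (sub_ne_zero.mpr hne)
  have hc' : (c : ℝ) ≠ 0 := Int.cast_ne_zero.mpr hc
  have hd' : (d : ℝ) ≠ 0 := Int.cast_ne_zero.mpr hd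
  rw [disjoint_fordDisk_iff hc' hd', closure_fordDisk_inter_nonempty_iff hc' hd']
  norm_cast
  exact ⟨one_le, one_le.ge_iff_eq'⟩

theorem ford_disks_disjoint_and_tangent_iff (a c b d : ℤ)
    (hac : IsCoprime a c) (hc : 0 < c) (hbd : IsCoprime b d) (hd : 0 < d)
    (hne : a * d ≠ b * c) :
    Disjoint
        (Metric.ball ((a : ℂ) / (c : ℂ) + Complex.I / (2 * (c : ℂ) ^ 2))
          (1 / (2 * (c : ℝ) ^ 2)))
        (Metric.ball ((b : ℂ) / (d : ℂ) + Complex.I / (2 * (d : ℂ) ^ 2))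
          (1 / (2 * (d : ℝ) ^ 2))) ∧
      ((closure (Metric.ball ((a : ℂ) / (c : ℂ) + Complex.I / (2 * (c : ℂ) ^ 2))
            (1 / (2 * (c : ℝ) ^ 2))) ∩
          closure (Metric.ball ((b : ℂ) / (d : ℂ) + Complex.I / (2 * (d : ℂ) ^ 2))
            (1 / (2 * (d : ℝ) ^ 2)))).Nonempty ↔ |a * d - b * c| = 1) := by
  simpa only [fordDisk_intCast] using
    ford_disks_disjoint_and_tangent_iff_general hc.ne' hd.ne' hne
end

section
/- Let n > 1 be a positive integer. The number of ways of writing n = c² + d² with c, d coprime positive integers equals the number of integers k with 0 < k < n, k coprime to n, such that the vertical line {k/n + i·t : t > 0} ⊂ ℍ contains a point of the orbit of i under the action of SL(2,ℤ) on the upper half-plane by linear fractional transformations. -/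
open UpperHalfPlane

/-!
If `g` has rows `(a, b)` and `(c, d)`, then `Re (g • i) = (ac + bd) / (c² + d²)`, and this fraction
is in lowest terms because `(ac + bd)² + 1 = (a² + b²)(c² + d²)`. So the line at `k / n` meets the
orbit exactly when `n = c² + d²` and `k = ac + bd` for some `g`, and the latter amounts to
`k ≡ c / d` modulo `n`, with `c`, `d` coprime. Since `c² ≡ -d²`, rotating `(c, d)` by a right angle
does not change `c / d` modulo `n`, so `(c, d)` may be taken positive. Two positive pairs with the
same residue coincide: `n` divides `c d' - c' d`, which is smaller than `n` in absolute value.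
-/

open scoped MatrixGroups

section CommRing

variable {R : Type*} [CommRing R]

lemma re_specialLinearGroup_smul_I [Algebra R ℝ] (g : SL(2, R)) :
    (g • I).re = algebraMap R ℝ (g 0 0 * g 1 0 + g 0 1 * g 1 1) /
      algebraMap R ℝ (g 1 0 ^ 2 + g 1 1 ^ 2) := by
  rw [← coe_re, specialLinearGroup_apply]
  simp only [coe_I, Complex.div_re, Complex.normSq_apply, Complex.add_re, Complex.add_im,
    Complex.re_ofReal_mul, Complex.im_ofReal_mul, Complex.I_re, Complex.I_im, Complex.ofReal_re,
    Complex.ofReal_im, map_add, map_mul, map_pow]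
  ring

lemma isCoprime_row_inner_sq_add_sq (g : SL(2, R)) :
    IsCoprime (g 0 0 * g 1 0 + g 0 1 * g 1 1) (g 1 0 ^ 2 + g 1 1 ^ 2) := by
  have hdet : g 0 0 * g 1 1 - g 0 1 * g 1 0 = 1 := by rw [← Matrix.det_fin_two, g.det_coe]
  exact ⟨-(g 0 0 * g 1 0 + g 0 1 * g 1 1), g 0 0 ^ 2 + g 0 1 ^ 2,
    by linear_combination (g 0 0 * g 1 1 - g 0 1 * g 1 0 + 1) * hdet⟩

lemma isCoprime_sq_add_sq_right {c d : R} (h : IsCoprime c d) : IsCoprime d (c ^ 2 + d ^ 2) := by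
  simpa only [sq d] using h.symm.pow_right.add_mul_left_right d

lemma exists_specialLinearGroup_row_inner_eq_iff {c d k : R} :
    (∃ g : SL(2, R), g 1 0 = c ∧ g 1 1 = d ∧ g 0 0 * g 1 0 + g 0 1 * g 1 1 = k) ↔
      IsCoprime c d ∧ c ^ 2 + d ^ 2 ∣ k * d - c := by
  constructor
  · rintro ⟨g, rfl, rfl, rfl⟩
    have hdet : g 0 0 * g 1 1 - g 0 1 * g 1 0 = 1 := by rw [← Matrix.det_fin_two, g.det_coe]
    exact ⟨⟨-g 0 1, g 0 0, by linear_combination hdet⟩,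
      ⟨g 0 1, by linear_combination g 1 0 * hdet⟩⟩
  · rintro ⟨hcd, m, hm⟩
    obtain ⟨u, v, huv⟩ := id hcd
    -- `(v, -u)` completes `(c, d)` to a matrix of determinant one; adding `t` times the second row
    -- to the first shifts the inner product of the rows by `t (c² + d²)`.
    obtain ⟨t, ht⟩ : c ^ 2 + d ^ 2 ∣ k - (v * c - u * d) :=
      (isCoprime_sq_add_sq_right hcd).symm.dvd_of_dvd_mul_right
        ⟨m + u, by linear_combination hm - c * huv⟩
    refine ⟨⟨!![v + t * c, -u + t * d; c, d], ?_⟩, rfl, rfl, ?_⟩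
    · rw [Matrix.det_fin_two_of]
      linear_combination huv
    · change (v + t * c) * c + (-u + t * d) * d = k
      linear_combination -ht

lemma sq_add_sq_dvd_mul_add_of_dvd_mul_sub {c d k : R} (hcd : IsCoprime c d)
    (h : c ^ 2 + d ^ 2 ∣ k * d - c) : c ^ 2 + d ^ 2 ∣ k * c + d := by
  obtain ⟨m, hm⟩ := h
  exact (isCoprime_sq_add_sq_right hcd).symm.dvd_of_dvd_mul_right
    ⟨c * m + 1, by linear_combination c * hm⟩

end CommRing

lemma exists_re_smul_I_eq_div_iff {k n : ℤ} (hn : 0 < n) :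
    (IsCoprime k n ∧ ∃ g : SL(2, ℤ), (g • I).re = (k : ℝ) / n) ↔
      ∃ c d : ℤ, IsCoprime c d ∧ c ^ 2 + d ^ 2 = n ∧ n ∣ k * d - c := by
  constructor
  · rintro ⟨hkn, g, hg⟩
    rw [re_specialLinearGroup_smul_I, eq_intCast, eq_intCast] at hg
    have hcop := isCoprime_row_inner_sq_add_sq g
    have hrow : IsCoprime (g 1 0) (g 1 1) :=
      (exists_specialLinearGroup_row_inner_eq_iff.mp ⟨g, rfl, rfl, rfl⟩).1
    have hpos : 0 < g 1 0 ^ 2 + g 1 1 ^ 2 :=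
      lt_of_le_of_ne (by positivity) (IsCoprime.sq_add_sq_ne_zero hrow).symm
    obtain ⟨hk, hn'⟩ := Rat.div_int_inj hpos hn (Int.isCoprime_iff_gcd_eq_one.mp hcop)
      (Int.isCoprime_iff_gcd_eq_one.mp hkn) (by exact_mod_cast hg)
    obtain ⟨-, hdvd⟩ := exists_specialLinearGroup_row_inner_eq_iff.mp ⟨g, rfl, rfl, hk⟩
    exact ⟨g 1 0, g 1 1, hrow, hn', hn' ▸ hdvd⟩
  · rintro ⟨c, d, hcd, rfl, hdvd⟩
    obtain ⟨g, rfl, rfl, rfl⟩ := exists_specialLinearGroup_row_inner_eq_iff.mpr ⟨hcd, hdvd⟩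
    exact ⟨isCoprime_row_inner_sq_add_sq g, g, re_specialLinearGroup_smul_I g⟩

lemma ne_zero_of_isCoprime_of_one_lt_sq_add_sq {c d : ℤ} (hcd : IsCoprime c d)
    (h : 1 < c ^ 2 + d ^ 2) : c ≠ 0 := by
  rintro rfl
  have hd : d ^ 2 = 1 := Int.isUnit_sq (isCoprime_zero_left.mp hcd)
  simp [hd] at h

lemma exists_pos_isCoprime_sq_add_sq_dvd {c d k : ℤ} (hcd : IsCoprime c d)
    (hc : c ≠ 0) (hd : d ≠ 0) (hdvd : c ^ 2 + d ^ 2 ∣ k * d - c) :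
    ∃ x y : ℤ, 0 < x ∧ 0 < y ∧ IsCoprime x y ∧ x ^ 2 + y ^ 2 = c ^ 2 + d ^ 2 ∧
      c ^ 2 + d ^ 2 ∣ k * y - x := by
  wlog hc0 : 0 < c generalizing c d
  · have hneg : (-c) ^ 2 + (-d) ^ 2 ∣ k * -d - -c := by
      rw [neg_sq, neg_sq, show k * -d - -c = -(k * d - c) by ring]
      exact hdvd.neg_right
    simpa only [neg_sq] using
      this hcd.neg_neg (neg_ne_zero.mpr hc) (neg_ne_zero.mpr hd) hneg (by omega)
  rcases lt_or_gt_of_ne hd with hd0 | hd0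
  · refine ⟨-d, c, by omega, hc0, hcd.symm.neg_left, by ring, ?_⟩
    simpa only [sub_neg_eq_add] using sq_add_sq_dvd_mul_add_of_dvd_mul_sub hcd hdvd
  · exact ⟨c, d, hc0, hd0, hcd, rfl, hdvd⟩

lemma eq_and_eq_of_sq_add_sq_eq_of_dvd {n k c d c' d' : ℤ} (hc : 0 ≤ c) (hd : 0 < d)
    (hc' : 0 ≤ c') (hd' : 0 < d') (h : c ^ 2 + d ^ 2 = n) (h' : c' ^ 2 + d' ^ 2 = n)
    (hk : n ∣ k * d - c) (hk' : n ∣ k * d' - c') : c = c' ∧ d = d' := by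
  have hdvd : n ∣ c * d' - c' * d := by
    rw [show c * d' - c' * d = d * (k * d' - c') - d' * (k * d - c) by ring]
    exact (hk'.mul_left d).sub (hk.mul_left d')
  have hlt : c * d' < n := by nlinarith [sq_nonneg (c - d')]
  have hlt' : c' * d < n := by nlinarith [sq_nonneg (c' - d)]
  have habs : |c * d' - c' * d| < n :=
    abs_sub_lt_of_nonneg_of_lt (by positivity) hlt (by positivity) hlt'
  have hcross : c * d' - c' * d = 0 := Int.eq_zero_of_abs_lt_dvd hdvd habs
  have hn : n ≠ 0 := by nlinarith
  have hsq : c ^ 2 = c' ^ 2 := mul_right_cancel₀ hn <| by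
    linear_combination (c * d' + c' * d) * hcross + c' ^ 2 * h - c ^ 2 * h'
  exact ⟨(sq_eq_sq₀ hc hc').mp hsq,
    (sq_eq_sq₀ hd.le hd'.le).mp (by linear_combination h - h' - hsq)⟩

/-- The representations of `n` as a sum of the squares of two coprime positive integers. -/
def primitiveSqPairs (n : ℕ) : Set (ℕ × ℕ) :=
  {q | 0 < q.1 ∧ 0 < q.2 ∧ Nat.Coprime q.1 q.2 ∧ q.1 ^ 2 + q.2 ^ 2 = n}

/-- The reduced fractions `k / n` in `(0, 1)`, recorded by their numerators, such that the vertical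
line at `k / n` meets the orbit of `i` under `SL(2, ℤ)`. -/
def orbitLineNumerators (n : ℕ) : Set ℕ :=
  {k | 0 < k ∧ k < n ∧ Nat.Coprime k n ∧ ∃ g : SL(2, ℤ), (g • I).re = (k : ℝ) / (n : ℝ)}

/-- The residue of `c / d` modulo `n`, as a natural number; it is meaningful for `d` coprime to `n`,
since the inverse in `ZMod n` has junk values at non-units. -/
def modRatio (n : ℕ) (q : ℕ × ℕ) : ℕ :=
  ((q.1 : ZMod n) * (q.2 : ZMod n)⁻¹).val

lemma modRatio_lt {n : ℕ} [NeZero n] (q : ℕ × ℕ) : modRatio n q < n :=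
  ZMod.val_lt _

lemma modRatio_eq_iff {n k : ℕ} {q : ℕ × ℕ} (hq : q.2.Coprime n) (hk : k < n) :
    modRatio n q = k ↔ (n : ℤ) ∣ k * q.2 - q.1 := by
  have : NeZero n := ⟨by omega⟩
  have hinv := ZMod.coe_mul_inv_eq_one q.2 hq
  calc modRatio n q = k ↔ (q.1 : ZMod n) * (q.2 : ZMod n)⁻¹ = k := by
        rw [modRatio, ← (ZMod.val_injective n).eq_iff, ZMod.val_natCast_of_lt hk]
    _ ↔ (k : ZMod n) * q.2 = q.1 :=
        ⟨fun h ↦ by linear_combination (q.1 : ZMod n) * hinv - q.2 * h,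
          fun h ↦ by linear_combination (k : ZMod n) * hinv - (q.2 : ZMod n)⁻¹ * h⟩
    _ ↔ (n : ℤ) ∣ k * q.2 - q.1 := by
        rw [← ZMod.intCast_zmod_eq_zero_iff_dvd, ← sub_eq_zero]
        push_cast
        rfl

lemma coprime_snd_of_mem_primitiveSqPairs {n : ℕ} {q : ℕ × ℕ} (hq : q ∈ primitiveSqPairs n) :
    q.2.Coprime n := by
  obtain ⟨-, -, hcop, rfl⟩ := hq
  exact_mod_cast isCoprime_sq_add_sq_right (Nat.isCoprime_iff_coprime.mpr hcop)

lemma mem_orbitLineNumerators_iff {n k : ℕ} (hn : 1 < n) :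
    k ∈ orbitLineNumerators n ↔
      k < n ∧ ∃ q ∈ primitiveSqPairs n, (n : ℤ) ∣ k * q.2 - q.1 := by
  have hline := exists_re_smul_I_eq_div_iff (k := k) (n := n) (by omega)
  simp only [Nat.isCoprime_iff_coprime, Int.cast_natCast] at hline
  constructor
  · rintro ⟨-, hkn, horbit⟩
    obtain ⟨c, d, hcd, hsum, hdvd⟩ := hline.mp horbit
    have hone : 1 < c ^ 2 + d ^ 2 := by omega
    obtain ⟨x, y, hx, hy, hxy, hsum', hdvd'⟩ := exists_pos_isCoprime_sq_add_sq_dvd hcd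
      (ne_zero_of_isCoprime_of_one_lt_sq_add_sq hcd hone)
      (ne_zero_of_isCoprime_of_one_lt_sq_add_sq hcd.symm (by rwa [add_comm])) (hsum ▸ hdvd)
    rw [hsum] at hsum' hdvd'
    lift x to ℕ using hx.le
    lift y to ℕ using hy.le
    exact ⟨hkn, (x, y), ⟨by exact_mod_cast hx, by exact_mod_cast hy,
      Nat.isCoprime_iff_coprime.mp hxy, by exact_mod_cast hsum'⟩, hdvd'⟩
  · rintro ⟨hkn, ⟨c, d⟩, ⟨-, -, hcd, hsum⟩, hdvd⟩
    obtain ⟨hcop, horbit⟩ := hline.mpr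
      ⟨c, d, Nat.isCoprime_iff_coprime.mpr hcd, by exact_mod_cast hsum, hdvd⟩
    have hk : k ≠ 0 := by
      rintro rfl
      exact hn.ne' ((Nat.coprime_zero_left n).mp hcop)
    exact ⟨Nat.pos_of_ne_zero hk, hkn, hcop, horbit⟩

lemma image_modRatio_primitiveSqPairs {n : ℕ} (hn : 1 < n) :
    modRatio n '' primitiveSqPairs n = orbitLineNumerators n := by
  have : NeZero n := ⟨by omega⟩
  ext k
  rw [mem_orbitLineNumerators_iff hn]
  constructor
  · rintro ⟨q, hq, rfl⟩
    have hlt := modRatio_lt (n := n) q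
    exact ⟨hlt, q, hq, (modRatio_eq_iff (coprime_snd_of_mem_primitiveSqPairs hq) hlt).mp rfl⟩
  · rintro ⟨hkn, q, hq, hdvd⟩
    exact ⟨q, hq, (modRatio_eq_iff (coprime_snd_of_mem_primitiveSqPairs hq) hkn).mpr hdvd⟩

lemma injOn_modRatio_primitiveSqPairs {n : ℕ} [NeZero n] :
    Set.InjOn (modRatio n) (primitiveSqPairs n) := by
  intro q hq q' hq' heq
  have hdvd := (modRatio_eq_iff (coprime_snd_of_mem_primitiveSqPairs hq) (modRatio_lt q')).mp heq
  have hdvd' := (modRatio_eq_iff (coprime_snd_of_mem_primitiveSqPairs hq') (modRatio_lt q')).mp rfl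
  obtain ⟨-, hd, -, hsum⟩ := hq
  obtain ⟨-, hd', -, hsum'⟩ := hq'
  have hpair := eq_and_eq_of_sq_add_sq_eq_of_dvd (Int.natCast_nonneg q.1) (by exact_mod_cast hd)
    (Int.natCast_nonneg q'.1) (by exact_mod_cast hd') (by exact_mod_cast hsum)
    (by exact_mod_cast hsum') hdvd hdvd'
  exact Prod.ext (by exact_mod_cast hpair.1) (by exact_mod_cast hpair.2)

theorem count_sum_two_squares_eq_count_orbit_lines (n : ℕ) (hn : 1 < n) :
    {q : ℕ × ℕ | 0 < q.1 ∧ 0 < q.2 ∧ Nat.Coprime q.1 q.2 ∧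
        q.1 ^ 2 + q.2 ^ 2 = n}.ncard =
      {k : ℕ | 0 < k ∧ k < n ∧ Nat.Coprime k n ∧
        ∃ g : Matrix.SpecialLinearGroup (Fin 2) ℤ,
          (g • UpperHalfPlane.I).re = (k : ℝ) / (n : ℝ)}.ncard := by
  have : NeZero n := ⟨by omega⟩
  change (primitiveSqPairs n).ncard = (orbitLineNumerators n).ncard
  rw [← image_modRatio_primitiveSqPairs hn, injOn_modRatio_primitiveSqPairs.ncard_image]
end
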